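/- Let n ≥ 1, let w_{ij} ≥ 0 (i,j = 1,…,n) be nonnegative weights, let β ≥ 0, let g : ℝ → ℝ be strictly increasing, and let y : {1,…,n} → ℝ. If u₁, u₂ : {1,…,n} → ℝ both satisfy β Δ_Γ u(i) + g(u(i) − y(i)) = 0 for every i = 1,…,n, then u₁ = u₂. In other words, the semi-linear graph PDE β Δ_Γ u + g(u − y) = 0 has at most one solution. -/

import Mathlib

open Finset

section GraphLaplacian

variable {ι R : Type*} [Fintype ι] [Ring R]

/-- The Laplacian `Δ_Γ u` on a finite weighted graph. The weights need not be symmetric; in this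
sign convention, nonnegative weights make `Δ_Γ u` nonnegative where `u` is maximal. -/
def graphLaplacian (w : ι → ι → R) (u : ι → R) (i : ι) : R :=
  ∑ j, w i j * (u i - u j)

theorem graphLaplacian_sub (w : ι → ι → R) (u v : ι → R) :
    graphLaplacian w (u - v) = graphLaplacian w u - graphLaplacian w v := by
  ext i
  simp only [graphLaplacian, Pi.sub_apply, ← sum_sub_distrib, ← mul_sub, sub_sub_sub_comm]

theorem graphLaplacian_nonneg_of_forall_le [PartialOrder R] [IsOrderedRing R] {w : ι → ι → R}
    {u : ι → R} {i : ι} (hw : ∀ j, 0 ≤ w i j) (hi : ∀ j, u j ≤ u i) :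
    0 ≤ graphLaplacian w u i :=
  sum_nonneg fun j _ => mul_nonneg (hw j) (sub_nonneg.2 (hi j))

variable [LinearOrder R] [IsOrderedRing R] {w : ι → ι → R} {β : R} {φ : ι → R → R}

theorem le_of_mul_graphLaplacian_add_le (hw : ∀ i j, 0 ≤ w i j) (hβ : 0 ≤ β)
    (hφ : ∀ i, StrictMono (φ i)) {u v : ι → R}
    (h : ∀ i, β * graphLaplacian w u i + φ i (u i) ≤ β * graphLaplacian w v i + φ i (v i)) :
    u ≤ v := by
  intro i
  have : Nonempty ι := ⟨i⟩
  obtain ⟨m, hm⟩ := Finite.exists_max (u - v)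
  have laplacian_le : graphLaplacian w v m ≤ graphLaplacian w u m := by
    rw [← sub_nonneg, ← Pi.sub_apply, ← graphLaplacian_sub]
    exact graphLaplacian_nonneg_of_forall_le (hw m) hm
  have φ_le : φ m (u m) ≤ φ m (v m) :=
    le_of_add_le_add_left <|
      (add_le_add_left (mul_le_mul_of_nonneg_left laplacian_le hβ) _).trans (h m)
  have le_at_max : u m ≤ v m := (hφ m).le_iff_le.1 φ_le
  exact sub_nonpos.1 ((hm i).trans (sub_nonpos.2 le_at_max))

theorem graph_pde_uniqueness_general (hw : ∀ i j, 0 ≤ w i j) (hβ : 0 ≤ β)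
    (hφ : ∀ i, StrictMono (φ i)) {f u₁ u₂ : ι → R}
    (h₁ : ∀ i, β * graphLaplacian w u₁ i + φ i (u₁ i) = f i)
    (h₂ : ∀ i, β * graphLaplacian w u₂ i + φ i (u₂ i) = f i) :
    u₁ = u₂ :=
  le_antisymm
    (le_of_mul_graphLaplacian_add_le hw hβ hφ fun i => ((h₁ i).trans (h₂ i).symm).le)
    (le_of_mul_graphLaplacian_add_le hw hβ hφ fun i => ((h₂ i).trans (h₁ i).symm).le)

end GraphLaplacian

/-- Uniqueness of solutions of the semi-linear graph PDE
`β Δ_Γ u + g (u - y) = 0`, where `Δ_Γ u i = ∑ j, w i j * (u i - u j)`,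
with nonnegative weights `w`, `β ≥ 0`, and `g` strictly increasing. -/
theorem graph_pde_uniqueness
    (n : ℕ) (hn : 1 ≤ n) (w : Fin n → Fin n → ℝ) (hw : ∀ i j, 0 ≤ w i j)
    (β : ℝ) (hβ : 0 ≤ β) (g : ℝ → ℝ) (hg : StrictMono g) (y : Fin n → ℝ)
    (u₁ u₂ : Fin n → ℝ)
    (h₁ : ∀ i, β * (∑ j, w i j * (u₁ i - u₁ j)) + g (u₁ i - y i) = 0)
    (h₂ : ∀ i, β * (∑ j, w i j * (u₂ i - u₂ j)) + g (u₂ i - y i) = 0) :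
    u₁ = u₂ :=
  graph_pde_uniqueness_general (φ := fun i t => g (t - y i)) hw hβ
    (fun i => hg.comp fun _ _ => (sub_lt_sub_iff_right (y i)).2) h₁ h₂
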